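/- arXiv:2209.07079 — 2 statements merged into one kernel-verified Lean document; each statement's English description precedes it below -/
import Mathlib

section
/- Let K : ℝ → ℝ be a bounded symmetric (K(−x) = K(x) for all x) probability density with compact support satisfying K(x) ≤ 1 for all x. Define f = K ⋆ K, i.e. f(u) = ∫ K(u−v) K(v) dv, and g(u) = ∫ f(u+v) f(v) dv. Then ∫ (2 f(u) − g(u))² du ≥ ∫ g(u)² du. -/
/-!
Expanding the square, `(2 f - g)² - g² = 4 (f² - f g)`, so the claim is `∫ f g ≤ ∫ f²`.
Since `2 f(u + v) f(v) ≤ f(u + v)² + f(v)²`, translation invariance of Lebesgue measure gives the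
pointwise bound `g u ≤ ∫ f²` for every `u`. Now `f ≥ 0` and `∫ f = (∫ K)² = 1`, so
`∫ f g ≤ (∫ f²) (∫ f) = ∫ f²`. The functions `f` and `g` are convolutions of integrable functions
(`integrable_conv`, `integral_conv`) and are bounded, which makes all the integrals converge.
-/

open MeasureTheory

theorem conv_eq (a b : ℝ → ℝ) :
    (fun u => ∫ v, a (u - v) * b v) =
      convolution b a (ContinuousLinearMap.mul ℝ ℝ) volume := by
  ext u
  simp [convolution, mul_comm]

theorem integrable_conv {a b : ℝ → ℝ} (ha : Integrable a) (hb : Integrable b) :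
    Integrable (fun u => ∫ v, a (u - v) * b v) := by
  rw [conv_eq]
  exact hb.integrable_convolution _ ha

theorem integral_conv {a b : ℝ → ℝ} (ha : Integrable a) (hb : Integrable b) :
    ∫ u, ∫ v, a (u - v) * b v = (∫ u, a u) * ∫ u, b u := by
  rw [conv_eq, integral_convolution _ hb ha]
  simp [mul_comm]

/-- By the inequality `2 a b ≤ a² + b²` and translation invariance, the autocorrelation of a
nonnegative square-integrable function is at most its value at `0`. -/
theorem autocorrelation_le {f : ℝ → ℝ} (hf2 : Integrable (fun u => f u ^ 2))
    (hf0 : ∀ u, 0 ≤ f u) (u : ℝ) :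
    ∫ v, f (u + v) * f v ≤ ∫ v, f v ^ 2 := by
  have hs : Integrable (fun v => f (u + v) ^ 2) := hf2.comp_add_left u
  calc ∫ v, f (u + v) * f v ≤ ∫ v, (f (u + v) ^ 2 + f v ^ 2) / 2 := by
        refine integral_mono_of_nonneg (.of_forall fun v => mul_nonneg (hf0 _) (hf0 _))
          ((hs.add hf2).div_const 2) (.of_forall fun v => ?_)
        show f (u + v) * f v ≤ (f (u + v) ^ 2 + f v ^ 2) / 2
        nlinarith [sq_nonneg (f (u + v) - f v)]
    _ = ∫ v, f v ^ 2 := by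
        rw [integral_div, integral_add hs hf2, integral_add_left_eq_self (fun v => f v ^ 2) u]
        ring

/-- For a bounded symmetric compactly supported probability density `K` with `K ≤ 1`,
with `f = K ⋆ K` and `g u = ∫ f (u + v) * f v dv`, one has
`∫ (2 f - g)² ≥ ∫ g²`. -/
theorem stmt_2 (K : ℝ → ℝ) (hmeas : Measurable K) (hnonneg : ∀ x, 0 ≤ K x)
    (hsymm : ∀ x, K (-x) = K x) (hbdd : ∀ x, K x ≤ 1)
    (hsupp : HasCompactSupport K) (hprob : ∫ x, K x = 1)
    (f g : ℝ → ℝ)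
    (hf : ∀ u, f u = ∫ v, K (u - v) * K v)
    (hg : ∀ u, g u = ∫ v, f (u + v) * f v) :
    ∫ u, (g u) ^ 2 ≤ ∫ u, (2 * f u - g u) ^ 2 := by
  -- A non-integrable `K` would have integral `0`, not `1`.
  have hK : Integrable K := by
    by_contra h
    simp [integral_undef h] at hprob
  have hf' : f = fun u => ∫ v, K (u - v) * K v := funext hf
  have hfi : Integrable f := hf' ▸ integrable_conv hK hK
  have hf1 : ∫ u, f u = 1 := by rw [hf', integral_conv hK hK, hprob, one_mul]
  have hf0 : ∀ u, 0 ≤ f u := fun u => by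
    rw [hf]
    exact integral_nonneg fun v => mul_nonneg (hnonneg _) (hnonneg _)
  have hfle : ∀ u, f u ≤ 1 := fun u => by
    rw [hf, ← hprob]
    exact integral_mono_of_nonneg (.of_forall fun v => mul_nonneg (hnonneg _) (hnonneg _)) hK
      (.of_forall fun v => mul_le_of_le_one_left (hnonneg v) (hbdd _))
  have hf2 : Integrable (fun u => f u ^ 2) := by
    simp only [sq]
    exact hfi.bdd_mul (c := 1) hfi.aestronglyMeasurable
      (.of_forall fun u => by rw [Real.norm_of_nonneg (hf0 u)]; exact hfle u)
  have hg0 : ∀ u, 0 ≤ g u := fun u => by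
    rw [hg]
    exact integral_nonneg fun v => mul_nonneg (hf0 _) (hf0 _)
  have hgle : ∀ u, g u ≤ ∫ v, f v ^ 2 := fun u => hg u ▸ autocorrelation_le hf2 hf0 u
  -- Substituting `v ↦ -v` writes `g` as the convolution of `f` with its reflection.
  have hg' : g = fun u => ∫ v, f (u - v) * f (-v) := by
    ext u
    rw [hg, ← integral_neg_eq_self (fun v => f (u + v) * f v)]
    simp only [sub_eq_add_neg]
  have hgi : Integrable g := hg' ▸ integrable_conv hfi hfi.comp_neg
  have hgb : ∀ᵐ u, ‖g u‖ ≤ ∫ v, f v ^ 2 :=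
    .of_forall fun u => by rw [Real.norm_of_nonneg (hg0 u)]; exact hgle u
  have hg2 : Integrable (fun u => g u ^ 2) := by
    simp only [sq (g _)]
    exact hgi.bdd_mul hgi.aestronglyMeasurable hgb
  have hgf : Integrable (fun u => g u * f u) := hfi.bdd_mul hgi.aestronglyMeasurable hgb
  have key : ∫ u, g u * f u ≤ ∫ v, f v ^ 2 := by
    calc ∫ u, g u * f u ≤ ∫ u, (∫ v, f v ^ 2) * f u :=
          integral_mono hgf (hfi.const_mul _) fun u =>
            mul_le_mul_of_nonneg_right (hgle u) (hf0 u)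
      _ = ∫ v, f v ^ 2 := by rw [integral_const_mul, hf1, mul_one]
  have hexp : ∀ u, (2 * f u - g u) ^ 2 = g u ^ 2 + 4 * (f u ^ 2 - g u * f u) := fun u => by ring
  simp only [hexp]
  have hd : Integrable (fun u => 4 * (f u ^ 2 - g u * f u)) := (hf2.sub hgf).const_mul 4
  rw [integral_add hg2 hd, integral_const_mul, integral_sub hf2 hgf]
  linarith
end

section
/- Let K : ℝ → ℝ be a bounded symmetric (K(−x) = K(x) for all x) probability density with compact support satisfying K(x) ≤ 1 for all x. Define f = K ⋆ K, i.e. f(u) = ∫ K(u−v) K(v) dv, and g(u) = ∫ f(u+v) f(v) dv, and assume ∫ g(u)² du > 0. Then for every ω with 0 < ω < 1/5, the asymptotic relative efficiency expression ( ∫ (2 f(u) − g(u))² du / ∫ g(u)² du )^{1/(2−3ω)} is at least 1. -/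
open MeasureTheory

/-!
Expanding the square, `∫ (2f - g)² = ∫ g² + 4 (∫ f² - ∫ f g)`, so it suffices to show
`∫ f g ≤ ∫ f²`. By the AM-GM inequality and translation invariance, the autocorrelation `g` is
bounded pointwise by its value at the origin, `g u ≤ ∫ f²`
(`autocorrelation_le_integral_sq`). Since `f = K ⋆ K` is again a probability density, integrating
this bound against `f` gives the claim. The exponent `1 / (2 - 3ω)` is positive, so raising a ratio
that is at least `1` to it preserves the bound. -/

/-- The autocorrelation of a nonnegative square-integrable function is largest at lag zero. -/
lemma autocorrelation_le_integral_sq {f : ℝ → ℝ} (hf2 : Integrable fun v => f v ^ 2)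
    (hf0 : ∀ v, 0 ≤ f v) (u : ℝ) :
    ∫ v, f (u + v) * f v ≤ ∫ v, f v ^ 2 := by
  have hshift : Integrable fun v => f (u + v) ^ 2 := hf2.comp_add_left u
  calc ∫ v, f (u + v) * f v
      ≤ ∫ v, (f (u + v) ^ 2 / 2 + f v ^ 2 / 2) := by
        refine integral_mono_of_nonneg (ae_of_all _ fun v => mul_nonneg (hf0 _) (hf0 _))
          ((hshift.div_const 2).add (hf2.div_const 2)) (ae_of_all _ fun v => ?_)
        have := two_mul_le_add_sq (f (u + v)) (f v)
        dsimp only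
        linarith
    _ = ∫ v, f v ^ 2 := by
        rw [integral_add (hshift.div_const 2) (hf2.div_const 2), integral_div, integral_div,
          integral_add_left_eq_self (fun v => f v ^ 2) u]
        ring

/-- The self-convolution of an integrable function of total mass one is again integrable of total
mass one. -/
lemma integrable_and_integral_selfConvolution {K f : ℝ → ℝ} (hK : Integrable K)
    (hprob : ∫ x, K x = 1) (hf : ∀ u, f u = ∫ v, K (u - v) * K v) :
    Integrable f ∧ ∫ u, f u = 1 := by
  have hfc : f = convolution K K (ContinuousLinearMap.mul ℝ ℝ) volume := by
    funext u
    rw [hf, convolution_def]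
    simp only [ContinuousLinearMap.mul_apply']
    exact integral_congr_ae (ae_of_all _ fun v => mul_comm _ _)
  rw [hfc]
  refine ⟨hK.integrable_convolution _ hK, ?_⟩
  rw [integral_convolution _ hK hK, hprob]
  simp

/-- Pitman asymptotic relative efficiency of the LF test over the GLR test:
for a bounded symmetric compactly supported probability density `K` with `K ≤ 1`,
`f = K ⋆ K`, `g u = ∫ f (u + v) * f v dv` with `∫ g² > 0`, and any `0 < ω < 1/5`,
`(∫ (2 f - g)² / ∫ g²)^(1/(2 - 3 ω)) ≥ 1`. -/
theorem stmt_3 (K : ℝ → ℝ) (hmeas : Measurable K) (hnonneg : ∀ x, 0 ≤ K x)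
    (hsymm : ∀ x, K (-x) = K x) (hbdd : ∀ x, K x ≤ 1)
    (hsupp : HasCompactSupport K) (hprob : ∫ x, K x = 1)
    (f g : ℝ → ℝ)
    (hf : ∀ u, f u = ∫ v, K (u - v) * K v)
    (hg : ∀ u, g u = ∫ v, f (u + v) * f v)
    (hgpos : 0 < ∫ u, (g u) ^ 2) :
    ∀ ω : ℝ, 0 < ω → ω < 1 / 5 →
      1 ≤ ((∫ u, (2 * f u - g u) ^ 2) / ∫ u, (g u) ^ 2) ^ ((1 : ℝ) / (2 - 3 * ω)) := by
  intro ω _ hω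
  have hK : Integrable K := Integrable.of_integral_ne_zero (by rw [hprob]; exact one_ne_zero)
  obtain ⟨hfi, hf1⟩ := integrable_and_integral_selfConvolution hK hprob hf
  have hf0 : ∀ u, 0 ≤ f u := fun u => by
    rw [hf]
    exact integral_nonneg fun v => mul_nonneg (hnonneg _) (hnonneg _)
  have hfle : ∀ u, f u ≤ 1 := fun u => by
    rw [hf, ← hprob]
    exact integral_mono_of_nonneg (ae_of_all _ fun v => mul_nonneg (hnonneg _) (hnonneg _)) hK
      (ae_of_all _ fun v => mul_le_of_le_one_left (hnonneg v) (hbdd _))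
  have hfm : Measurable f := by
    rw [funext hf]
    have h : Measurable (Function.uncurry fun u v : ℝ => K (u - v) * K v) :=
      (hmeas.comp (measurable_fst.sub measurable_snd)).mul (hmeas.comp measurable_snd)
    exact h.stronglyMeasurable.integral_prod_right.measurable
  have hgm : Measurable g := by
    rw [funext hg]
    have h : Measurable (Function.uncurry fun u v : ℝ => f (u + v) * f v) :=
      (hfm.comp (measurable_fst.add measurable_snd)).mul (hfm.comp measurable_snd)
    exact h.stronglyMeasurable.integral_prod_right.measurable
  have hf2 : Integrable fun u => f u ^ 2 := by
    refine hfi.mono' (hfm.pow_const 2).aestronglyMeasurable (ae_of_all _ fun u => ?_)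
    rw [Real.norm_of_nonneg (sq_nonneg _)]
    exact pow_le_of_le_one (hf0 u) (hfle u) two_ne_zero
  have hg0 : ∀ u, 0 ≤ g u := fun u => by
    rw [hg]
    exact integral_nonneg fun v => mul_nonneg (hf0 _) (hf0 _)
  have hgle : ∀ u, g u ≤ ∫ v, f v ^ 2 := fun u => by
    rw [hg]
    exact autocorrelation_le_integral_sq hf2 hf0 u
  have hbound : Integrable fun u => f u * ∫ v, f v ^ 2 := hfi.mul_const _
  have hfg : Integrable fun u => f u * g u := by
    refine hbound.mono' (hfm.mul hgm).aestronglyMeasurable (ae_of_all _ fun u => ?_)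
    rw [Real.norm_of_nonneg (mul_nonneg (hf0 u) (hg0 u))]
    exact mul_le_mul_of_nonneg_left (hgle u) (hf0 u)
  have hfgle : ∫ u, f u * g u ≤ ∫ u, f u ^ 2 := by
    calc ∫ u, f u * g u ≤ ∫ u, f u * ∫ v, f v ^ 2 :=
          integral_mono hfg hbound fun u => mul_le_mul_of_nonneg_left (hgle u) (hf0 u)
      _ = ∫ u, f u ^ 2 := by rw [integral_mul_const, hf1, one_mul]
  -- A nonzero Bochner integral forces integrability.
  have hg2 : Integrable fun u => g u ^ 2 := Integrable.of_integral_ne_zero hgpos.ne'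
  have hexpand : ∫ u, (2 * f u - g u) ^ 2
      = (∫ u, g u ^ 2) + 4 * ((∫ u, f u ^ 2) - ∫ u, f u * g u) := by
    have hdiff : Integrable fun u => 4 * (f u ^ 2 - f u * g u) := (hf2.sub hfg).const_mul 4
    rw [← integral_sub hf2 hfg, ← integral_const_mul, ← integral_add hg2 hdiff]
    exact integral_congr_ae (ae_of_all _ fun u => by dsimp only; ring)
  refine Real.one_le_rpow ?_ (one_div_nonneg.mpr (by linarith))
  rw [one_le_div hgpos, hexpand]
  linarith
end
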